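/- The double integral over the unit square of the function f_2(x,y) = (1/2 − xy)^6 · 1_{xy ≤ 1/2} equals (1/896)·(363/140 + log 2); that is, ∫_0^1 ∫_0^1 (1/2 − xy)^6 · 1_{xy ≤ 1/2} dx dy = (1/896)·(363/140 + log 2). -/

import Mathlib

lemma inner_prim (x b : ℝ) : (∫ y in (0:ℝ)..b, (1 / 2 - x * y) ^ 6) =
    1/64*b - 3/32*x*b^2 + 5/16*x^2*b^3 - 5/8*x^3*b^4 + 3/4*x^4*b^5 - 1/2*x^5*b^6 + x^6*b^7/7 := by
  have h : ∀ y ∈ Set.uIcc (0:ℝ) b, HasDerivAt (fun y : ℝ => 1/64*y - 3/32*x*y^2 + 5/16*x^2*y^3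
      - 5/8*x^3*y^4 + 3/4*x^4*y^5 - 1/2*x^5*y^6 + x^6*y^7/7) ((1 / 2 - x * y) ^ 6) y := by
    intro y _
    have hp := fun n : ℕ => hasDerivAt_pow n y
    have := (((((((hasDerivAt_id y).const_mul (1/64)).sub ((hp 2).const_mul (3/32*x))).add
      ((hp 3).const_mul (5/16*x^2))).sub ((hp 4).const_mul (5/8*x^3))).add
      ((hp 5).const_mul (3/4*x^4))).sub ((hp 6).const_mul (1/2*x^5))).add
      (((hp 7).const_mul (x^6)).div_const 7)
    refine this.congr_deriv ?_
    norm_num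
    ring
  rw [intervalIntegral.integral_eq_sub_of_hasDerivAt h
    ((by fun_prop : Continuous fun y : ℝ => (1 / 2 - x * y) ^ 6).intervalIntegrable _ _)]
  ring

lemma inner_small (x : ℝ) (h0 : 0 ≤ x) (h1 : x ≤ 1/2) : (∫ y in (0:ℝ)..1,
        (if x * y ≤ 1 / 2 then (1 / 2 - x * y) ^ 6 else (0 : ℝ))) =
    1/64 - 3/32*x + 5/16*x^2 - 5/8*x^3 + 3/4*x^4 - 1/2*x^5 + x^6/7 := by
  have : (∫ y in (0:ℝ)..1, (if x * y ≤ 1 / 2 then (1 / 2 - x * y) ^ 6 else (0 : ℝ))) =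
      ∫ y in (0:ℝ)..1, (1 / 2 - x * y) ^ 6 := by
    apply intervalIntegral.integral_congr
    intro y hy
    rw [Set.uIcc_of_le zero_le_one] at hy
    have : x * y ≤ 1 / 2 := by nlinarith [hy.1, hy.2]
    simp only [this, if_true]
  rw [this, inner_prim]
  ring

lemma inner_large (x : ℝ) (h1 : 1/2 ≤ x) : (∫ y in (0:ℝ)..1,
        (if x * y ≤ 1 / 2 then (1 / 2 - x * y) ^ 6 else (0 : ℝ))) = (1/896) * x⁻¹ := by
  have hx : 0 < x := by linarith
  have hb0 : 0 ≤ 1 / (2 * x) := by positivity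
  have hb1 : 1 / (2 * x) ≤ 1 := by rw [div_le_one (by positivity)]; linarith
  have hxb : x * (1 / (2 * x)) = 1 / 2 := by field_simp
  have hc : Continuous fun y : ℝ => (if x * y ≤ 1 / 2 then (1 / 2 - x * y) ^ 6 else (0 : ℝ)) := by
    apply Continuous.if_le <;> try fun_prop
    intro y hy
    rw [hy]; norm_num
  rw [← intervalIntegral.integral_add_adjacent_intervals (b := 1 / (2 * x))
    (hc.intervalIntegrable _ _) (hc.intervalIntegrable _ _)]
  have e1 : (∫ y in (0:ℝ)..(1 / (2 * x)),
      (if x * y ≤ 1 / 2 then (1 / 2 - x * y) ^ 6 else (0 : ℝ))) =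
      ∫ y in (0:ℝ)..(1 / (2 * x)), (1 / 2 - x * y) ^ 6 := by
    apply intervalIntegral.integral_congr
    intro y hy
    rw [Set.uIcc_of_le hb0] at hy
    have : x * y ≤ 1 / 2 := by nlinarith [mul_le_mul_of_nonneg_left hy.2 hx.le]
    simp only [this, if_true]
  have e2 : (∫ y in (1 / (2 * x))..1,
      (if x * y ≤ 1 / 2 then (1 / 2 - x * y) ^ 6 else (0 : ℝ))) =
      ∫ y in (1 / (2 * x))..1, (0:ℝ) := by
    apply intervalIntegral.integral_congr
    intro y hy
    rw [Set.uIcc_of_le hb1] at hy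
    have h : 1 / 2 ≤ x * y := by nlinarith [mul_le_mul_of_nonneg_left hy.1 hx.le]
    by_cases h' : x * y ≤ 1 / 2
    · have : x * y = 1 / 2 := le_antisymm h' h
      simp [this]
    · simp only [h', if_false]
  rw [e1, e2, inner_prim]
  simp only [intervalIntegral.integral_zero]
  field_simp
  norm_num

lemma outer_poly : (∫ x in (0:ℝ)..(1/2),
    (1/64 - 3/32*x + 5/16*x^2 - 5/8*x^3 + 3/4*x^4 - 1/2*x^5 + x^6/7)) =
    1/896 * (363/140) := by
  have h : ∀ y ∈ Set.uIcc (0:ℝ) (1/2), HasDerivAt (fun y : ℝ => 1/64*y - 3/64*y^2 + 5/48*y^3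
      - 5/32*y^4 + 3/20*y^5 - 1/12*y^6 + 1/49*y^7)
      (1/64 - 3/32*y + 5/16*y^2 - 5/8*y^3 + 3/4*y^4 - 1/2*y^5 + y^6/7) y := by
    intro y _
    have hp := fun n : ℕ => hasDerivAt_pow n y
    have := (((((((hasDerivAt_id y).const_mul (1/64)).sub ((hp 2).const_mul (3/64))).add
      ((hp 3).const_mul (5/48))).sub ((hp 4).const_mul (5/32))).add
      ((hp 5).const_mul (3/20))).sub ((hp 6).const_mul (1/12))).add
      ((hp 7).const_mul (1/49))
    refine this.congr_deriv ?_
    norm_num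
    ring
  rw [intervalIntegral.integral_eq_sub_of_hasDerivAt h
    (Continuous.intervalIntegrable (by fun_prop) _ _)]
  norm_num

theorem stmt16 :
    (∫ x in (0:ℝ)..1, ∫ y in (0:ℝ)..1,
        (if x * y ≤ 1 / 2 then (1 / 2 - x * y) ^ 6 else (0 : ℝ))) =
      (1 / 896) * (363 / 140 + Real.log 2) := by
  have c1 : Set.EqOn (fun x : ℝ => 1/64 - 3/32*x + 5/16*x^2 - 5/8*x^3 + 3/4*x^4 - 1/2*x^5 + x^6/7)
      (fun x : ℝ => ∫ y in (0:ℝ)..1,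
        (if x * y ≤ 1 / 2 then (1 / 2 - x * y) ^ 6 else (0 : ℝ))) (Set.uIcc 0 (1/2)) := by
    intro x hx
    rw [Set.uIcc_of_le (by norm_num)] at hx
    exact (inner_small x hx.1 hx.2).symm
  have c2 : Set.EqOn (fun x : ℝ => (1/896) * x⁻¹)
      (fun x : ℝ => ∫ y in (0:ℝ)..1,
        (if x * y ≤ 1 / 2 then (1 / 2 - x * y) ^ 6 else (0 : ℝ))) (Set.uIcc (1/2) 1) := by
    intro x hx
    rw [Set.uIcc_of_le (by norm_num)] at hx
    exact (inner_large x hx.1).symm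
  have i1 : IntervalIntegrable (fun x : ℝ => 1/64 - 3/32*x + 5/16*x^2 - 5/8*x^3 + 3/4*x^4
      - 1/2*x^5 + x^6/7) MeasureTheory.volume 0 (1/2) :=
    Continuous.intervalIntegrable (by fun_prop) _ _
  have i2 : IntervalIntegrable (fun x : ℝ => (1/896) * x⁻¹) MeasureTheory.volume (1/2) 1 := by
    apply ContinuousOn.intervalIntegrable
    apply ContinuousOn.mul continuousOn_const
    apply ContinuousOn.inv₀ continuousOn_id
    intro x hx
    rw [Set.uIcc_of_le (by norm_num)] at hx
    have := hx.1
    simp only [id]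
    intro h0
    linarith
  rw [← intervalIntegral.integral_add_adjacent_intervals (b := 1/2)
    (i1.congr (c1.mono Set.uIoc_subset_uIcc)) (i2.congr (c2.mono Set.uIoc_subset_uIcc)),
    ← intervalIntegral.integral_congr c1, ← intervalIntegral.integral_congr c2, outer_poly,
    intervalIntegral.integral_const_mul, integral_inv_of_pos (by norm_num) (by norm_num)]
  norm_num
  ring
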